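/- Let b and σ_1, …, σ_{r̄} : ℝ^r → ℝ^r be C¹ vector fields and suppose Z : {(u,t) : 0 ≤ u ≤ t} × ℝ^r → ℝ^r is a flow for b, i.e. Z_{u,u}(x) = x, ∂_t Z_{u,t}(x) = b(Z_{u,t}(x)), and Z_{u,t}(Z_{s,u}(x)) = Z_{s,t}(x) for s ≤ u ≤ t; assume moreover that for each fixed t the map (u, x) ↦ Z_{u,t}(x) is twice continuously differentiable in x and C¹ in u, with all indicated derivatives continuous. Fix s ≤ t and x ∈ ℝ^r, let h : [s,t] → ℝ^{r̄} be C¹, and let Y : [s,t] → ℝ^r solve Y(s) = x and Y'(u) = b(Y(u)) + Σ_{j=1}^{r̄} σ_j(Y(u)) h_j'(u). Then for every C² function f : ℝ^r → ℝ, f(Y(t)) = f(Z_{s,t}(x)) + Σ_{j=1}^{r̄} ∫_s^t ∂_{σ_j}(f ∘ Z_{u,t})(Z_{s,u}(x)) h_j'(u) du + Σ_{i,j=1}^{r̄} ∫_s^t ( ∫_s^u ∂_{σ_i}( ∂_{σ_j}(f ∘ Z_{u,t}) ∘ Z_{v,u} )(Y(v)) h_i'(v) dv ) h_j'(u) du,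 where for a C¹ function φ : ℝ^r → ℝ and a vector field g, ∂_g φ(y) := ⟨∇φ(y), g(y)⟩. -/

import Mathlib

open Set in
theorem aux_fderiv {E : Type*} [NormedAddCommGroup E] [NormedSpace ℝ E]
    (G : ℝ → E → E) (T : ℝ)
    (hG : ContDiffOn ℝ 1 (fun p : ℝ × E => G p.1 p.2) (Icc 0 T ×ˢ (univ : Set E)))
    (u : ℝ) (hu : u ∈ Icc 0 T) (y : E) :
    HasFDerivAt (G u) ((fderivWithin ℝ (fun p : ℝ × E => G p.1 p.2)
      (Icc 0 T ×ˢ (univ : Set E)) (u, y)).comp (ContinuousLinearMap.inr ℝ ℝ E)) y := by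
  have h1 := (hG.differentiableOn one_ne_zero (u, y) ⟨hu, mem_univ _⟩).hasFDerivWithinAt
  have h2 : HasFDerivWithinAt (fun z : E => (u, z)) (ContinuousLinearMap.inr ℝ ℝ E) univ y :=
    (hasFDerivAt_prodMk_right u y).hasFDerivWithinAt
  have h3 := HasFDerivWithinAt.comp y h1 h2 (fun z _ => ⟨hu, mem_univ _⟩)
  exact hasFDerivWithinAt_univ.1 h3

open Set in
theorem aux_fderiv_cont {E : Type*} [NormedAddCommGroup E] [NormedSpace ℝ E]
    (G : ℝ → E → E) (T : ℝ) (hT : 0 < T)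
    (hG : ContDiffOn ℝ 1 (fun p : ℝ × E => G p.1 p.2) (Icc 0 T ×ˢ (univ : Set E))) :
    ContinuousOn (fun p : ℝ × E => fderiv ℝ (G p.1) p.2) (Icc 0 T ×ˢ (univ : Set E)) := by
  have h1 := hG.continuousOn_fderivWithin
    ((uniqueDiffOn_Icc hT).prod uniqueDiffOn_univ) le_rfl
  have h2 := h1.clm_comp (continuousOn_const (c := ContinuousLinearMap.inr ℝ ℝ E))
  refine h2.congr ?_
  rintro ⟨u, y⟩ ⟨hu, -⟩
  exact (aux_fderiv G T hG u hu y).fderiv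

open Set in
/-- backward equation -/
theorem aux_backward {E : Type*} [NormedAddCommGroup E] [NormedSpace ℝ E]
    (b : E → E) (Z : ℝ → ℝ → E → E)
    (hZid : ∀ u : ℝ, 0 ≤ u → ∀ x, Z u u x = x)
    (hZode : ∀ u : ℝ, 0 ≤ u → ∀ x, ∀ t ∈ Set.Ici u,
        HasDerivWithinAt (fun τ => Z u τ x) (b (Z u t x)) (Set.Ici u) t)
    (hZsemi : ∀ s u t : ℝ, 0 ≤ s → s ≤ u → u ≤ t → ∀ x, Z u t (Z s u x) = Z s t x)
    (T : ℝ)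
    (hG : ContDiffOn ℝ 1 (fun p : ℝ × E => Z p.1 T p.2) (Icc 0 T ×ˢ (univ : Set E)))
    (u : ℝ) (hu0 : 0 ≤ u) (huT : u < T) (y : E) :
    fderivWithin ℝ (fun p : ℝ × E => Z p.1 T p.2)
      (Icc 0 T ×ˢ (univ : Set E)) (u, y) (1, b y) = 0 := by
  have h1 := (hG.differentiableOn one_ne_zero (u, y)
    ⟨⟨hu0, huT.le⟩, mem_univ _⟩).hasFDerivWithinAt
  have h2 : HasDerivWithinAt (fun v => (v, Z u v y)) ((1 : ℝ), b y) (Icc u T) u := by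
    have := hZode u hu0 y u self_mem_Ici
    rw [hZid u hu0] at this
    exact (hasDerivWithinAt_id u _).prodMk (this.mono Icc_subset_Ici_self)
  have hone : HasFDerivWithinAt (fun p : ℝ × E => Z p.1 T p.2)
      (fderivWithin ℝ (fun p : ℝ × E => Z p.1 T p.2)
      (Icc 0 T ×ˢ (univ : Set E)) (u, y)) (Icc 0 T ×ˢ (univ : Set E)) (u, Z u u y) := by
    rw [hZid u hu0]; exact h1
  have hm : MapsTo (fun v => (v, Z u v y)) (Icc u T) (Icc 0 T ×ˢ (univ : Set E)) :=
    fun v hv => ⟨⟨hu0.trans hv.1, hv.2⟩, mem_univ _⟩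
  have h3 := hone.comp_hasDerivWithinAt u h2 hm
  have h4 : HasDerivWithinAt (fun _ : ℝ => Z u T y) (0 : E) (Icc u T) u :=
    hasDerivWithinAt_const _ _ _
  have h5 := h3.congr (f₁ := fun _ : ℝ => Z u T y)
    (fun v hv => (hZsemi u v T hu0 hv.1 hv.2 y).symm)
    ((hZsemi u u T hu0 le_rfl huT.le y).symm)
  exact (uniqueDiffOn_Icc huT u ⟨le_rfl, huT.le⟩).eq_deriv _ h5 h4

open Set in
theorem aux_first {E : Type*} [NormedAddCommGroup E] [NormedSpace ℝ E] {rbar : ℕ}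
    (b : E → E) (σ : Fin rbar → E → E) (hσ : ∀ j, Continuous (σ j))
    (Z : ℝ → ℝ → E → E)
    (hZid : ∀ u : ℝ, 0 ≤ u → ∀ x, Z u u x = x)
    (hZode : ∀ u : ℝ, 0 ≤ u → ∀ x, ∀ t ∈ Set.Ici u,
        HasDerivWithinAt (fun τ => Z u τ x) (b (Z u t x)) (Set.Ici u) t)
    (hZsemi : ∀ s u t : ℝ, 0 ≤ s → s ≤ u → u ≤ t → ∀ x, Z u t (Z s u x) = Z s t x)
    (T : ℝ)
    (hG : ContDiffOn ℝ 1 (fun p : ℝ × E => Z p.1 T p.2) (Icc 0 T ×ˢ (univ : Set E)))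
    (s : ℝ) (hs : 0 ≤ s) (hsT : s ≤ T)
    (k : Fin rbar → ℝ → ℝ) (hk : ∀ j, Continuous (k j)) (Y : ℝ → E)
    (hY : ∀ u ∈ Set.Icc s T,
        HasDerivWithinAt Y (b (Y u) + ∑ j, k j u • σ j (Y u)) (Set.Icc s T) u)
    (φ : E → ℝ) (hφ : ContDiff ℝ 1 φ) :
    φ (Y T) = φ (Z s T (Y s)) + ∑ j, ∫ u in s..T,
      fderiv ℝ (fun w => φ (Z u T w)) (Y u) (σ j (Y u)) * k j u := by
  rcases hsT.eq_or_lt with rfl | hlt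
  · simp [hZid s hs]
  have hT : 0 < T := hs.trans_lt hlt
  have hYc : ContinuousOn Y (Icc s T) := fun u hu => (hY u hu).continuousWithinAt
  have hpair : ContinuousOn (fun u => (u, Y u)) (Icc s T) := continuousOn_id.prodMk hYc
  have hmaps : MapsTo (fun u => (u, Y u)) (Icc s T) (Icc 0 T ×ˢ (univ : Set E)) :=
    fun u hu => ⟨⟨hs.trans hu.1, hu.2⟩, mem_univ _⟩
  have hZY : ContinuousOn (fun u => Z u T (Y u)) (Icc s T) :=
    hG.continuousOn.comp hpair hmaps
  have hAY : ContinuousOn (fun u => fderiv ℝ (Z u T) (Y u)) (Icc s T) :=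
    (aux_fderiv_cont (fun u => Z u T) T hT hG).comp hpair hmaps
  have hfd : ∀ u ∈ Icc s T, ∀ w, fderiv ℝ (fun w => φ (Z u T w)) (Y u) w
      = fderiv ℝ φ (Z u T (Y u)) (fderiv ℝ (Z u T) (Y u) w) := by
    intro u hu w
    have h1 := (aux_fderiv (fun u => Z u T) T hG u ⟨hs.trans hu.1, hu.2⟩ (Y u)).differentiableAt
    have h2 := (hφ.differentiable one_ne_zero) (Z u T (Y u))
    rw [show (fun w => φ (Z u T w)) = φ ∘ Z u T from rfl, fderiv_comp _ h2 h1]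
    rfl
  have hcont : ∀ j, ContinuousOn (fun u =>
      fderiv ℝ (fun w => φ (Z u T w)) (Y u) (σ j (Y u)) * k j u) (Icc s T) := by
    intro j
    refine ContinuousOn.mul ?_ (hk j).continuousOn
    refine ContinuousOn.congr (f := fun u =>
      fderiv ℝ φ (Z u T (Y u)) (fderiv ℝ (Z u T) (Y u) (σ j (Y u)))) ?_
      (fun u hu => hfd u hu _)
    exact ((hφ.continuous_fderiv one_ne_zero).comp_continuousOn hZY).clm_apply
      (hAY.clm_apply ((hσ j).comp_continuousOn hYc))
  have hint : ∀ j, IntervalIntegrable (fun u =>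
      fderiv ℝ (fun w => φ (Z u T w)) (Y u) (σ j (Y u)) * k j u) MeasureTheory.volume s T :=
    fun j => (hcont j).intervalIntegrable_of_Icc hsT
  rw [← intervalIntegral.integral_finsetSum (fun j _ => hint j)]
  have hFTC := intervalIntegral.integral_eq_sub_of_hasDerivAt_of_le hsT
    (f := fun u => φ (Z u T (Y u)))
    (f' := fun u => ∑ j, fderiv ℝ (fun w => φ (Z u T w)) (Y u) (σ j (Y u)) * k j u)
    (hφ.continuous.comp_continuousOn hZY) ?_
    (ContinuousOn.intervalIntegrable_of_Icc hsT (continuousOn_finsetSum _ fun j _ => hcont j))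
  · rw [hFTC, hZid T hT.le]; ring
  intro u hu
  have huI : u ∈ Icc s T := Ioo_subset_Icc_self hu
  have h0 := hG.differentiableOn one_ne_zero (u, Y u) (hmaps huI)
  have h1 := h0.hasFDerivWithinAt
  have h2 := (hasDerivWithinAt_id u (Icc s T)).prodMk (hY u huI)
  have h3 := h1.comp_hasDerivWithinAt u h2 hmaps
  have h4 := h3.hasDerivAt (Icc_mem_nhds hu.1 hu.2)
  have h5 := ((hφ.differentiable one_ne_zero) (Z u T (Y u))).hasFDerivAt.comp_hasDerivAt
    (f := fun u => Z u T (Y u)) u h4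
  refine h5.congr_deriv (Eq.symm ?_)
  have e : ((1 : ℝ), b (Y u) + ∑ j, k j u • σ j (Y u))
      = (1, b (Y u)) + ∑ j, k j u • ContinuousLinearMap.inr ℝ ℝ E (σ j (Y u)) := by
    have : ∑ j, k j u • ContinuousLinearMap.inr ℝ ℝ E (σ j (Y u))
        = ContinuousLinearMap.inr ℝ ℝ E (∑ j, k j u • σ j (Y u)) := by simp only [map_sum, map_smul]
    rw [this, ContinuousLinearMap.inr_apply, Prod.mk_add_mk, add_zero]
  rw [e, map_add, aux_backward b Z hZid hZode hZsemi T hG u (hs.trans hu.1.le) hu.2, zero_add,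
    map_sum, map_sum]
  refine Finset.sum_congr rfl fun j _ => ?_
  rw [hfd u huI, (aux_fderiv (fun u => Z u T) T hG u (hmaps huI).1 (Y u)).fderiv, map_smul,
    map_smul, smul_eq_mul, mul_comm]
  rfl

open Set in
/-- autonomy: the flow depends only on the time difference -/
theorem aux_shift {r : ℕ}
    (b : EuclideanSpace ℝ (Fin r) → EuclideanSpace ℝ (Fin r))
    (Z : ℝ → ℝ → EuclideanSpace ℝ (Fin r) → EuclideanSpace ℝ (Fin r))
    (hZid : ∀ u : ℝ, 0 ≤ u → ∀ x, Z u u x = x)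
    (hZode : ∀ u : ℝ, 0 ≤ u → ∀ x, ∀ t ∈ Set.Ici u,
        HasDerivWithinAt (fun τ => Z u τ x) (b (Z u t x)) (Set.Ici u) t)
    (hZsemi : ∀ s u t : ℝ, 0 ≤ s → s ≤ u → u ≤ t → ∀ x, Z u t (Z s u x) = Z s t x)
    (t : ℝ)
    (hG : ContDiffOn ℝ 1 (fun p : ℝ × EuclideanSpace ℝ (Fin r) => Z p.1 t p.2)
      (Icc 0 t ×ˢ univ))
    (v u : ℝ) (hv : 0 ≤ v) (hvu : v ≤ u) (hut : u ≤ t) :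
    Z v u = Z (t - u + v) t := by
  funext y
  ext i
  have key := aux_first (rbar := 0) b (fun _ => 0) (fun j => j.elim0) Z hZid hZode hZsemi t hG
    (t - u + v) (by linarith) (by linarith) (fun _ => 0) (fun j => j.elim0)
    (fun τ => Z v (τ - (t - u)) y) ?_ (fun z => z i)
    (EuclideanSpace.proj (𝕜 := ℝ) i).contDiff
  · simp only [Finset.univ_eq_empty, Finset.sum_empty, add_zero] at key
    rw [show t - (t - u) = u by ring, show t - u + v - (t - u) = v by ring, hZid v hv] at key
    exact key
  intro τ hτ
  have h1 := hZode v hv y (τ - (t - u)) (by simp only [mem_Ici]; linarith [hτ.1])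
  have h2 : HasDerivWithinAt (fun τ : ℝ => τ - (t - u)) 1 (Icc (t - u + v) t) τ :=
    (hasDerivWithinAt_id τ _).sub_const _
  have h3 := h1.scomp τ h2 (fun a ha => by simp only [mem_Ici]; linarith [ha.1])
  simpa [Function.comp_def] using h3

open Set in
/-- derivative of `y ↦ ∂_g (f ∘ G) (y)` -/
theorem aux_second {E : Type*} [NormedAddCommGroup E] [NormedSpace ℝ E]
    (G : E → E) (hG : ContDiff ℝ 2 G) (g : E → E) (hg : ContDiff ℝ 1 g)
    (f : E → ℝ) (hf : ContDiff ℝ 2 f) :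
    ContDiff ℝ 1 (fun y => fderiv ℝ (fun z => f (G z)) y (g y)) ∧
    (∀ y, fderiv ℝ (fun z => f (G z)) y (g y) = fderiv ℝ f (G y) (fderiv ℝ G y (g y))) ∧
    ∀ y w, fderiv ℝ (fun y => fderiv ℝ (fun z => f (G z)) y (g y)) y w =
      fderiv ℝ f (G y) (fderiv ℝ G y (fderiv ℝ g y w) + fderiv ℝ (fderiv ℝ G) y w (g y))
      + fderiv ℝ (fderiv ℝ f) (G y) (fderiv ℝ G y w) (fderiv ℝ G y (g y)) := by
  have hGd : Differentiable ℝ G := hG.differentiable two_ne_zero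
  have hfd : Differentiable ℝ f := hf.differentiable two_ne_zero
  have hG1 : ContDiff ℝ 1 (fderiv ℝ G) := hG.fderiv_right (by norm_num)
  have hf1 : ContDiff ℝ 1 (fderiv ℝ f) := hf.fderiv_right (by norm_num)
  have e : ∀ y, fderiv ℝ (fun z => f (G z)) y (g y)
      = fderiv ℝ f (G y) (fderiv ℝ G y (g y)) := by
    intro y
    rw [show (fun z => f (G z)) = f ∘ G from rfl, fderiv_comp _ (hfd _) (hGd _)]
    rfl
  have hfun : (fun y => fderiv ℝ (fun z => f (G z)) y (g y))
      = fun y => fderiv ℝ f (G y) (fderiv ℝ G y (g y)) := funext e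
  refine ⟨?_, e, ?_⟩
  · rw [hfun]
    exact (hf1.comp (hG.of_le (by norm_num))).clm_apply (hG1.clm_apply hg)
  · intro y w
    rw [hfun]
    have h1 := ((hf1.differentiable one_ne_zero) (G y)).hasFDerivAt.comp y (hGd y).hasFDerivAt
    have h2 := ((hG1.differentiable one_ne_zero) y).hasFDerivAt.clm_apply
      ((hg.differentiable one_ne_zero) y).hasFDerivAt
    have h3 := h1.clm_apply h2
    have h4 := h3.fderiv
    simp only [Function.comp_apply] at h4
    rw [h4]
    simp

open Set in
theorem aux_K_cont
    (s t : ℝ) (hst : s ≤ t) (K : ℝ → ℝ → ℝ)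
    (hK : ContinuousOn (fun p : ℝ × ℝ => K p.1 p.2) {p | s ≤ p.2 ∧ p.2 ≤ p.1 ∧ p.1 ≤ t}) :
    ContinuousOn (fun u => ∫ v in s..u, K u v) (Icc s t) := by
  let cu : ℝ → ℝ := fun u => max s (min u t)
  let Kc : ℝ → ℝ → ℝ := fun u v => K (cu u) (max s (min v (cu u)))
  have hc : Continuous (Function.uncurry Kc) := by
    have := hK.comp_continuous (f := fun p : ℝ × ℝ => (cu p.1, max s (min p.2 (cu p.1))))
      (by fun_prop) ?_
    · exact this
    · intro p
      have h1 : s ≤ cu p.1 := le_max_left _ _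
      exact ⟨le_max_left _ _, max_le h1 (min_le_right _ _), max_le hst (min_le_right _ _)⟩
  have h2 : Continuous (fun u => ∫ v in s..u, Kc u v) :=
    intervalIntegral.continuous_parametric_intervalIntegral_of_continuous hc continuous_id
  refine h2.continuousOn.congr ?_
  intro u hu
  have h3 : cu u = u := by simp [cu, hu.1, hu.2]
  refine intervalIntegral.integral_congr ?_
  intro v hv
  rw [uIcc_of_le hu.1] at hv
  simp [Kc, h3, hv.1, hv.2]

/-- Second-order interpolation formula comparing the flow `Y` of the perturbed ODE
`Y' = b(Y) + Σ_j σ_j(Y) h_j'` with the two-parameter flow `Z_{u,t}` of `z' = b(z)`: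
for every `C²` function `f`,
`f(Y(t)) = f(Z_{s,t}(x)) + Σ_j ∫_s^t ∂_{σ_j}(f∘Z_{u,t})(Z_{s,u}(x)) h_j'(u) du
  + Σ_{i,j} ∫_s^t (∫_s^u ∂_{σ_i}(∂_{σ_j}(f∘Z_{u,t})∘Z_{v,u})(Y(v)) h_i'(v) dv) h_j'(u) du`,
where `∂_g φ(y) := ⟨∇φ(y), g(y)⟩` is the directional derivative along the vector field `g`. -/
theorem stmt_19 {r rbar : ℕ}
    (b : EuclideanSpace ℝ (Fin r) → EuclideanSpace ℝ (Fin r))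
    (σ : Fin rbar → EuclideanSpace ℝ (Fin r) → EuclideanSpace ℝ (Fin r))
    (hb : ContDiff ℝ 1 b) (hσ : ∀ j, ContDiff ℝ 1 (σ j))
    (Z : ℝ → ℝ → EuclideanSpace ℝ (Fin r) → EuclideanSpace ℝ (Fin r))
    (hZid : ∀ u : ℝ, 0 ≤ u → ∀ x, Z u u x = x)
    (hZode : ∀ u : ℝ, 0 ≤ u → ∀ x, ∀ t ∈ Set.Ici u,
        HasDerivWithinAt (fun τ => Z u τ x) (b (Z u t x)) (Set.Ici u) t)
    (hZsemi : ∀ s u t : ℝ, 0 ≤ s → s ≤ u → u ≤ t → ∀ x, Z u t (Z s u x) = Z s t x)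
    (hZC1 : ∀ t : ℝ, ContDiffOn ℝ 1 (fun p : ℝ × EuclideanSpace ℝ (Fin r) => Z p.1 t p.2)
        (Set.Icc 0 t ×ˢ (Set.univ : Set (EuclideanSpace ℝ (Fin r)))))
    (hZC2 : ∀ t : ℝ, ∀ u ∈ Set.Icc (0:ℝ) t, ContDiff ℝ 2 (fun x => Z u t x))
    (hZC2cont : ∀ t : ℝ, ContinuousOn
        (fun p : ℝ × EuclideanSpace ℝ (Fin r) =>
          fderiv ℝ (fun x => fderiv ℝ (fun y => Z p.1 t y) x) p.2)
        (Set.Icc 0 t ×ˢ (Set.univ : Set (EuclideanSpace ℝ (Fin r)))))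
    (s t : ℝ) (hs : 0 ≤ s) (hst : s ≤ t) (x : EuclideanSpace ℝ (Fin r))
    (h : Fin rbar → ℝ → ℝ) (hh : ∀ j, ContDiff ℝ 1 (h j))
    (Y : ℝ → EuclideanSpace ℝ (Fin r)) (hYs : Y s = x)
    (hY : ∀ u ∈ Set.Icc s t,
        HasDerivWithinAt Y (b (Y u) + ∑ j, deriv (h j) u • σ j (Y u)) (Set.Icc s t) u)
    (f : EuclideanSpace ℝ (Fin r) → ℝ) (hf : ContDiff ℝ 2 f) :
    f (Y t) = f (Z s t x)
      + (∑ j, ∫ u in s..t,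
          fderiv ℝ (fun y => f (Z u t y)) (Z s u x) (σ j (Z s u x)) * deriv (h j) u)
      + ∑ i, ∑ j, ∫ u in s..t,
          (∫ v in s..u,
            fderiv ℝ (fun w => fderiv ℝ (fun z => f (Z u t z)) (Z v u w) (σ j (Z v u w)))
              (Y v) (σ i (Y v)) * deriv (h i) v) * deriv (h j) u := by
  have hk : ∀ j, Continuous (deriv (h j)) := fun j => (hh j).continuous_deriv le_rfl
  rcases hst.eq_or_lt with rfl | hlt
  · simp [hZid s hs, hYs]
  have ht : 0 < t := hs.trans_lt hlt
  have hYc : ContinuousOn Y (Set.Icc s t) := fun u hu => (hY u hu).continuousWithinAt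
  have hA := aux_fderiv_cont (fun u => Z u t) t ht (hZC1 t)
  have hsec := fun u (hu : u ∈ Set.Icc (0:ℝ) t) j =>
    aux_second (Z u t) (hZC2 t u hu) (σ j) (hσ j) f hf
  have hf1 : Continuous (fderiv ℝ f) := hf.continuous_fderiv two_ne_zero
  have hf2 : Continuous (fderiv ℝ (fderiv ℝ f)) :=
    (hf.fderiv_right (m := 1) (by norm_num)).continuous_fderiv one_ne_zero
  -- the first-order formula
  have hfirst := aux_first b σ (fun j => (hσ j).continuous) Z hZid hZode hZsemi t (hZC1 t) s hs hst
    (fun j => deriv (h j)) hk Y hY f (hf.of_le (by norm_num))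
  rw [hfirst, hYs, add_assoc]
  congr 1
  -- the formula for the inner function
  have hinner : ∀ j, ∀ u ∈ Set.Icc s t,
      fderiv ℝ (fun y => f (Z u t y)) (Y u) (σ j (Y u))
        = fderiv ℝ (fun y => f (Z u t y)) (Z s u x) (σ j (Z s u x))
          + ∑ i, ∫ v in s..u,
            fderiv ℝ (fun w => fderiv ℝ (fun z => f (Z u t z)) (Z v u w) (σ j (Z v u w)))
              (Y v) (σ i (Y v)) * deriv (h i) v := by
    intro j u hu
    have := aux_first b σ (fun j => (hσ j).continuous) Z hZid hZode hZsemi u (hZC1 u) s hs hu.1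
      (fun j => deriv (h j)) hk Y
      (fun v hv => (hY v ⟨hv.1, hv.2.trans hu.2⟩).mono (Set.Icc_subset_Icc_right hu.2))
      _ (hsec u ⟨hs.trans hu.1, hu.2⟩ j).1
    rw [hYs] at this
    exact this
  have hZs : ContinuousOn (fun u => Z s u x) (Set.Icc s t) := fun u hu =>
    ((hZode s hs x u hu.1).continuousWithinAt).mono Set.Icc_subset_Ici_self
  have hc1 : ∀ j, ContinuousOn (fun u =>
      fderiv ℝ (fun y => f (Z u t y)) (Z s u x) (σ j (Z s u x)) * deriv (h j) u)
      (Set.Icc s t) := by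
    intro j
    refine ContinuousOn.mul ?_ (hk j).continuousOn
    refine ContinuousOn.congr (f := fun u => fderiv ℝ f (Z u t (Z s u x))
      (fderiv ℝ (Z u t) (Z s u x) (σ j (Z s u x)))) ?_
      (fun u hu => (hsec u ⟨hs.trans hu.1, hu.2⟩ j).2.1 _)
    have hpair : ContinuousOn (fun u => (u, Z s u x)) (Set.Icc s t) := continuousOn_id.prodMk hZs
    have hmaps : Set.MapsTo (fun u => (u, Z s u x)) (Set.Icc s t)
      (Set.Icc 0 t ×ˢ (Set.univ : Set (EuclideanSpace ℝ (Fin r)))) :=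
      fun u hu => ⟨⟨hs.trans hu.1, hu.2⟩, Set.mem_univ _⟩
    exact (hf1.comp_continuousOn ((hZC1 t).continuousOn.comp hpair hmaps)).clm_apply
      ((hA.comp hpair hmaps).clm_apply ((hσ j).continuous.comp_continuousOn hZs))
  have hc2 : ∀ i j, ContinuousOn (fun u => (∫ v in s..u,
            fderiv ℝ (fun w => fderiv ℝ (fun z => f (Z u t z)) (Z v u w) (σ j (Z v u w)))
              (Y v) (σ i (Y v)) * deriv (h i) v) * deriv (h j) u) (Set.Icc s t) := by
    intro i j
    refine ContinuousOn.mul ?_ (hk j).continuousOn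
    apply aux_K_cont s t hst (fun u v =>
      fderiv ℝ (fun w => fderiv ℝ (fun z => f (Z u t z)) (Z v u w) (σ j (Z v u w)))
              (Y v) (σ i (Y v)) * deriv (h i) v)
    refine ContinuousOn.mul ?_ ((hk i).comp continuous_snd).continuousOn
    set Tr : Set (ℝ × ℝ) := {p | s ≤ p.2 ∧ p.2 ≤ p.1 ∧ p.1 ≤ t} with hTr
    -- point, tangent vector
    have hYv : ContinuousOn (fun p : ℝ × ℝ => Y p.2) Tr :=
      hYc.comp continuousOn_snd (fun p hp => ⟨hp.1, hp.2.1.trans hp.2.2⟩)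
    have hp1 : ContinuousOn (fun p : ℝ × ℝ => (t - p.1 + p.2, Y p.2)) Tr :=
      ContinuousOn.prodMk (by fun_prop) hYv
    have hm1 : Set.MapsTo (fun p : ℝ × ℝ => (t - p.1 + p.2, Y p.2)) Tr
        (Set.Icc 0 t ×ˢ (Set.univ : Set (EuclideanSpace ℝ (Fin r)))) := by
      rintro p ⟨h1, h2, h3⟩
      exact ⟨⟨by simp only; linarith, by simp only; linarith⟩, Set.mem_univ _⟩
    have hP : ContinuousOn (fun p : ℝ × ℝ => Z (t - p.1 + p.2) t (Y p.2)) Tr :=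
      (hZC1 t).continuousOn.comp hp1 hm1
    have hW : ContinuousOn (fun p : ℝ × ℝ =>
        fderiv ℝ (Z (t - p.1 + p.2) t) (Y p.2) (σ i (Y p.2))) Tr :=
      (hA.comp hp1 hm1).clm_apply ((hσ i).continuous.comp_continuousOn hYv)
    have hp2 : ContinuousOn (fun p : ℝ × ℝ => (p.1, Z (t - p.1 + p.2) t (Y p.2))) Tr :=
      continuousOn_fst.prodMk hP
    have hm2 : Set.MapsTo (fun p : ℝ × ℝ => (p.1, Z (t - p.1 + p.2) t (Y p.2))) Tr
        (Set.Icc 0 t ×ˢ (Set.univ : Set (EuclideanSpace ℝ (Fin r)))) := by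
      rintro p ⟨h1, h2, h3⟩
      exact ⟨⟨by simp only; linarith, h3⟩, Set.mem_univ _⟩
    have hQ := (hZC1 t).continuousOn.comp hp2 hm2
    have hA2 := hA.comp hp2 hm2
    have hB2 := (hZC2cont t).comp hp2 hm2
    have hs2 := (hσ j).continuous.comp_continuousOn hP
    have hds2 := ((hσ j).continuous_fderiv one_ne_zero).comp_continuousOn hP
    have hfin := ((hf1.comp_continuousOn hQ).clm_apply
      ((hA2.clm_apply (hds2.clm_apply hW)).add ((hB2.clm_apply hW).clm_apply hs2))).add
      (((hf2.comp_continuousOn hQ).clm_apply (hA2.clm_apply hW)).clm_apply (hA2.clm_apply hs2))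
    refine hfin.congr ?_
    rintro ⟨u, v⟩ ⟨h1, h2, h3⟩
    simp only at h1 h2 h3
    have hu : u ∈ Set.Icc (0:ℝ) t := ⟨by linarith, h3⟩
    have hv : t - u + v ∈ Set.Icc (0:ℝ) t := ⟨by linarith, by linarith⟩
    obtain ⟨c1, -, c3⟩ := hsec u hu j
    have hsh := aux_shift b Z hZid hZode hZsemi t (hZC1 t) v u (hs.trans h1) h2 h3
    simp only [hsh]
    rw [show (fun w => fderiv ℝ (fun z => f (Z u t z)) (Z (t - u + v) t w)
        (σ j (Z (t - u + v) t w)))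
      = (fun y => fderiv ℝ (fun z => f (Z u t z)) y (σ j y)) ∘ Z (t - u + v) t from rfl,
      fderiv_comp _ ((c1.differentiable one_ne_zero) _)
        (((hZC2 t _ hv).differentiable two_ne_zero) _)]
    rw [ContinuousLinearMap.comp_apply, c3]
    rfl
  have hi1 := fun j => (hc1 j).intervalIntegrable_of_Icc (μ := MeasureTheory.volume) hst
  have hi2 := fun i j => (hc2 i j).intervalIntegrable_of_Icc (μ := MeasureTheory.volume) hst
  rw [Finset.sum_comm, ← Finset.sum_add_distrib]
  refine Finset.sum_congr rfl fun j _ => ?_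
  rw [← intervalIntegral.integral_finsetSum (fun i _ => hi2 i j),
    ← intervalIntegral.integral_add (hi1 j) (ContinuousOn.intervalIntegrable_of_Icc hst
      (continuousOn_finsetSum _ fun i _ => hc2 i j))]
  refine intervalIntegral.integral_congr fun u hu => ?_
  rw [Set.uIcc_of_le hst] at hu
  beta_reduce
  rw [hinner j u hu, add_mul, Finset.sum_mul]
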